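/- arXiv:1908.08800 — 4 statements merged into one kernel-verified Lean document; each statement's English description precedes it below -/
import Mathlib

section
/- Suppose the continuation aggregator satisfies the long-run contractivity inequality |H(x,z,a,v) − H(x,z,a,w)| ≤ β(z) ∫ sup_{x'∈X} |v(x',z') − w(x',z')| Q(z,dz') for all feasible (x,z,a) and all v, w ∈ 𝒱 (no condition on r(L_β) is needed), and suppose T_σ maps 𝒱 into itself for a feasible policy σ. Then for all v, w ∈ 𝒱 and all n ≥ 1: sup_{(x,z)∈S} |(T_σ^n v)(x,z) − (T_σ^n w)(x,z)| ≤ m_n · sup_{(x,z)∈S} |v(x,z) − w(x,z)|, where m_n := sup_{z∈Z} E_z[∏_{t=0}^{n-1} β(Z_t)]. -/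
open MeasureTheory ProbabilityTheory Filter Topology

/-- `expProd Q β n z` is the expectation `E_z[∏_{t=0}^{n-1} β(Z_t)]` of the product of
discount factors along the Markov chain generated by the kernel `Q` and started at `z`,
encoded by the canonical iterated-integral recursion (the empty product is `1`). -/
noncomputable def expProd {Z : Type*} [MeasurableSpace Z] (Q : ProbabilityTheory.Kernel Z Z)
    (β : Z → ℝ) : ℕ → Z → ℝ
  | 0 => fun _ => 1
  | n + 1 => fun z => β z * ∫ z', expProd Q β n z' ∂(Q z)

/-- `mSup Q β n = sup_{z ∈ Z} E_z[∏_{t=0}^{n-1} β(Z_t)]`. -/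
noncomputable def mSup {Z : Type*} [MeasurableSpace Z] (Q : ProbabilityTheory.Kernel Z Z)
    (β : Z → ℝ) (n : ℕ) : ℝ :=
  ⨆ z, expProd Q β n z

/-- The policy operator `(T_σ v)(x,z) = H(x,z,σ(x,z),v)`. -/
noncomputable def Tpol {X Z A : Type*} (H : X → Z → A → ((X × Z) → ℝ) → ℝ)
    (σ : X × Z → A) (v : (X × Z) → ℝ) : (X × Z) → ℝ :=
  fun p => H p.1 p.2 (σ p) v

theorem expProd_props {Z : Type*} [MeasurableSpace Z]
    (Q : ProbabilityTheory.Kernel Z Z) [IsMarkovKernel Q]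
    (β : Z → ℝ) (hβm : Measurable β) (hβ0 : ∀ z, 0 ≤ β z) (C : ℝ) (hC : ∀ z, β z ≤ C) (n : ℕ) :
    Measurable (expProd Q β n) ∧ (∀ z, 0 ≤ expProd Q β n z) ∧
      ∃ M, ∀ z, expProd Q β n z ≤ M := by
  induction n with
  | zero => exact ⟨measurable_const, fun _ => zero_le_one, 1, fun _ => le_rfl⟩
  | succ n ih =>
    obtain ⟨hm, h0, M, hM⟩ := ih
    have hi0 : ∀ z, 0 ≤ ∫ z', expProd Q β n z' ∂(Q z) := fun z => integral_nonneg h0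
    refine ⟨?_, fun z => mul_nonneg (hβ0 z) (hi0 z), C * M, fun z => ?_⟩
    · exact hβm.mul (hm.stronglyMeasurable.integral_kernel (κ := Q)).measurable
    · have h1 : ∫ z', expProd Q β n z' ∂(Q z) ≤ ∫ _, M ∂(Q z) :=
        integral_mono_of_nonneg (Eventually.of_forall h0) (integrable_const M)
          (Eventually.of_forall hM)
      have h2 : ∫ z', expProd Q β n z' ∂(Q z) ≤ M := by simpa using h1
      exact mul_le_mul (hC z) h2 (hi0 z) ((hβ0 z).trans (hC z))

/-- If the continuation aggregator satisfies the long-run contractivity inequality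
(with no condition on `r(L_β)`), and `T_σ` maps `𝒱` into itself for a feasible policy `σ`,
then for all `v, w ∈ 𝒱` and `n ≥ 1`,
`sup_S |T_σ^n v − T_σ^n w| ≤ m_n · sup_S |v − w|`, where
`m_n = sup_z E_z[∏_{t=0}^{n-1} β(Z_t)]`. -/
theorem policy_operator_contraction_estimate
    {X Z A : Type*} [MetricSpace X] [MeasurableSpace X] [BorelSpace X] [Nonempty X]
    [MetricSpace Z] [MeasurableSpace Z] [BorelSpace Z] [Nonempty Z]
    [MetricSpace A] [TopologicalSpace.SeparableSpace A] [MeasurableSpace A] [BorelSpace A]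
    (Q : ProbabilityTheory.Kernel Z Z) [IsMarkovKernel Q]
    (Γ : X → Z → Set A) (hΓ : ∀ x z, (Γ x z).Nonempty)
    (H : X → Z → A → ((X × Z) → ℝ) → ℝ)
    -- `𝒱` is a set of bounded Borel measurable real functions on `S = X × Z`.
    (𝒱 : Set ((X × Z) → ℝ))
    (h𝒱 : ∀ v ∈ 𝒱, Measurable v ∧ ∃ M, ∀ p, |v p| ≤ M)
    (β : Z → ℝ) (hβm : Measurable β) (hβ0 : ∀ z, 0 ≤ β z) (hβb : ∃ C, ∀ z, β z ≤ C)
    -- Long-run contractivity inequality.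
    (hH : ∀ v ∈ 𝒱, ∀ w ∈ 𝒱, ∀ x z a, a ∈ Γ x z →
      |H x z a v - H x z a w| ≤
        β z * ∫ z', (⨆ x' : X, |v (x', z') - w (x', z')|) ∂(Q z))
    -- A feasible policy `σ` such that `T_σ` is a self-map on `𝒱`.
    (σ : X × Z → A) (hσm : Measurable σ) (hσf : ∀ p : X × Z, σ p ∈ Γ p.1 p.2)
    (hself : ∀ v ∈ 𝒱, Tpol H σ v ∈ 𝒱) :
    ∀ v ∈ 𝒱, ∀ w ∈ 𝒱, ∀ n : ℕ, 1 ≤ n →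
      (⨆ p : X × Z, |(Tpol H σ)^[n] v p - (Tpol H σ)^[n] w p|) ≤
        mSup Q β n * ⨆ p : X × Z, |v p - w p| := by
  intro v hv w hw n _
  obtain ⟨C, hC⟩ := hβb
  have hE := expProd_props Q β hβm hβ0 C hC
  have hit : ∀ n : ℕ, ∀ u ∈ 𝒱, (Tpol H σ)^[n] u ∈ 𝒱 := by
    intro n u hu
    induction n with
    | zero => exact hu
    | succ n ih => rw [Function.iterate_succ_apply']; exact hself _ ih
  have hbd : BddAbove (Set.range fun p : X × Z => |v p - w p|) := by
    obtain ⟨-, M, hM⟩ := h𝒱 v hv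
    obtain ⟨-, N, hN⟩ := h𝒱 w hw
    refine ⟨M + N, ?_⟩
    rintro _ ⟨p, rfl⟩
    exact (abs_sub _ _).trans (add_le_add (hM p) (hN p))
  have hD0 : 0 ≤ ⨆ p : X × Z, |v p - w p| := Real.iSup_nonneg fun p => abs_nonneg _
  have key : ∀ n : ℕ, ∀ x z, |(Tpol H σ)^[n] v (x, z) - (Tpol H σ)^[n] w (x, z)| ≤
      expProd Q β n z * ⨆ p : X × Z, |v p - w p| := by
    intro n
    induction n with
    | zero =>
      intro x z
      simpa [expProd] using le_ciSup hbd (x, z)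
    | succ n ih =>
      intro x z
      rw [Function.iterate_succ_apply', Function.iterate_succ_apply']
      refine (hH _ (hit n v hv) _ (hit n w hw) x z _ (hσf (x, z))).trans ?_
      obtain ⟨hm, h0, M, hM⟩ := hE n
      have hint : Integrable (expProd Q β n) (Q z) :=
        Integrable.of_bound hm.aestronglyMeasurable M
          (Eventually.of_forall fun y => by rw [Real.norm_eq_abs, abs_of_nonneg (h0 y)]; exact hM y)
      change _ ≤ β z * (∫ z', expProd Q β n z' ∂(Q z)) * _
      rw [mul_assoc, ← integral_mul_const]
      refine mul_le_mul_of_nonneg_left ?_ (hβ0 z)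
      exact integral_mono_of_nonneg
        (Eventually.of_forall fun y => Real.iSup_nonneg fun x' => abs_nonneg _)
        (hint.mul_const _) (Eventually.of_forall fun y => ciSup_le fun x' => ih x' y)
  refine ciSup_le fun p => (key n p.1 p.2).trans (mul_le_mul_of_nonneg_right ?_ hD0)
  obtain ⟨-, -, M, hM⟩ := hE n
  exact le_ciSup (f := expProd Q β n) ⟨M, by rintro _ ⟨y, rfl⟩; exact hM y⟩ p.2
end

section
/- Suppose the continuation aggregator satisfies the long-run contractivity inequality |H(x,z,a,v) − H(x,z,a,w)| ≤ β(z) ∫ sup_{x'∈X} |v(x',z') − w(x',z')| Q(z,dz') for all feasible (x,z,a) and all v, w ∈ 𝒱̂ (no condition on r(L_β) is needed), and suppose the Bellman operator T maps 𝒱̂ into itself. Then for all v, w ∈ 𝒱̂ and all n ≥ 1: sup_{(x,z)∈S} |(T^n v)(x,z) − (T^n w)(x,z)| ≤ m_n · sup_{(x,z)∈S} |v(x,z) − w(x,z)|, where m_n := sup_{z∈Z} E_z[∏_{t=0}^{n-1} β(Z_t)]. -/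
open MeasureTheory ProbabilityTheory Filter Topology

/-- The Bellman operator `(T v)(x,z) = sup_{a ∈ Γ(x,z)} H(x,z,a,v)`. -/
noncomputable def TBell {X Z A : Type*} (H : X → Z → A → ((X × Z) → ℝ) → ℝ)
    (Γ : X → Z → Set A) (v : (X × Z) → ℝ) : (X × Z) → ℝ :=
  fun p => sSup ((fun a => H p.1 p.2 a v) '' Γ p.1 p.2)

theorem expProd_aux {Z : Type*} [MeasurableSpace Z] (Q : ProbabilityTheory.Kernel Z Z)
    [IsMarkovKernel Q] (β : Z → ℝ) (hβm : Measurable β) (hβ0 : ∀ z, 0 ≤ β z)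
    (C : ℝ) (hC : ∀ z, β z ≤ C) (n : ℕ) :
    Measurable (expProd Q β n) ∧ (∀ z, 0 ≤ expProd Q β n z) ∧
      ∃ K, ∀ z, expProd Q β n z ≤ K := by
  induction n with
  | zero => exact ⟨measurable_const, fun _ => zero_le_one, 1, fun _ => le_rfl⟩
  | succ n ih =>
    obtain ⟨hm, h0, K, hK⟩ := ih
    refine ⟨?_, fun z => mul_nonneg (hβ0 z) (integral_nonneg h0), C * K, fun z => ?_⟩
    · exact hβm.mul (hm.stronglyMeasurable.integral_kernel (κ := Q)).measurable
    · have h1 : ∫ z', expProd Q β n z' ∂(Q z) ≤ K := by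
        have := integral_mono_of_nonneg (μ := Q z) (ae_of_all _ h0) (integrable_const K)
          (ae_of_all _ hK)
        simpa using this
      exact mul_le_mul (hC z) h1 (integral_nonneg h0) ((hβ0 z).trans (hC z))

theorem sSup_image_aux {A : Type*} (s : Set A) (hs : s.Nonempty) (f g : A → ℝ) (c : ℝ)
    (h : ∀ a ∈ s, |f a - g a| ≤ c) : |sSup (f '' s) - sSup (g '' s)| ≤ c := by
  have key : ∀ f g : A → ℝ, (∀ a ∈ s, |f a - g a| ≤ c) → BddAbove (f '' s) →
      BddAbove (g '' s) ∧ sSup (g '' s) ≤ sSup (f '' s) + c := by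
    intro f g h hb
    have hle : ∀ y ∈ g '' s, y ≤ sSup (f '' s) + c := by
      rintro _ ⟨a, ha, rfl⟩
      have h1 := le_csSup hb (Set.mem_image_of_mem f ha)
      have h2 := (abs_le.1 (h a ha)).1
      linarith
    exact ⟨⟨_, hle⟩, csSup_le (hs.image g) hle⟩
  have h' : ∀ a ∈ s, |g a - f a| ≤ c := fun a ha => by rw [abs_sub_comm]; exact h a ha
  by_cases hf : BddAbove (f '' s)
  · obtain ⟨hg, h1⟩ := key f g h hf
    obtain ⟨_, h2⟩ := key g f h' hg
    rw [abs_le]; constructor <;> linarith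
  · have hg : ¬ BddAbove (g '' s) := fun hg => hf (key g f h' hg).1
    rw [Real.sSup_of_not_bddAbove hf, Real.sSup_of_not_bddAbove hg]
    obtain ⟨a, ha⟩ := hs
    simpa using (abs_nonneg _).trans (h a ha)

/-- If the continuation aggregator satisfies the long-run contractivity inequality
(with no condition on `r(L_β)`) on `𝒱̂`, and the Bellman operator `T` maps `𝒱̂` into
itself, then for all `v, w ∈ 𝒱̂` and `n ≥ 1`,
`sup_S |T^n v − T^n w| ≤ m_n · sup_S |v − w|`, where
`m_n = sup_z E_z[∏_{t=0}^{n-1} β(Z_t)]`. -/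
theorem bellman_operator_contraction_estimate
    {X Z A : Type*} [MetricSpace X] [MeasurableSpace X] [BorelSpace X] [Nonempty X]
    [MetricSpace Z] [MeasurableSpace Z] [BorelSpace Z] [Nonempty Z]
    [MetricSpace A] [TopologicalSpace.SeparableSpace A]
    (Q : ProbabilityTheory.Kernel Z Z) [IsMarkovKernel Q]
    (Γ : X → Z → Set A) (hΓ : ∀ x z, (Γ x z).Nonempty)
    (H : X → Z → A → ((X × Z) → ℝ) → ℝ)
    -- `𝒱̂` is a set of bounded Borel measurable real functions on `S = X × Z`.
    (𝒱hat : Set ((X × Z) → ℝ))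
    (h𝒱hat : ∀ v ∈ 𝒱hat, Measurable v ∧ ∃ M, ∀ p, |v p| ≤ M)
    (β : Z → ℝ) (hβm : Measurable β) (hβ0 : ∀ z, 0 ≤ β z) (hβb : ∃ C, ∀ z, β z ≤ C)
    -- Long-run contractivity inequality on `𝒱̂`.
    (hH : ∀ v ∈ 𝒱hat, ∀ w ∈ 𝒱hat, ∀ x z a, a ∈ Γ x z →
      |H x z a v - H x z a w| ≤
        β z * ∫ z', (⨆ x' : X, |v (x', z') - w (x', z')|) ∂(Q z))
    -- `T` is a self-map on `𝒱̂` (and is real-valued there).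
    (hself : ∀ v ∈ 𝒱hat, TBell H Γ v ∈ 𝒱hat) :
    ∀ v ∈ 𝒱hat, ∀ w ∈ 𝒱hat, ∀ n : ℕ, 1 ≤ n →
      (⨆ p : X × Z, |(TBell H Γ)^[n] v p - (TBell H Γ)^[n] w p|) ≤
        mSup Q β n * ⨆ p : X × Z, |v p - w p| := by
  intro v hv w hw n _
  obtain ⟨C, hC⟩ := hβb
  have aux := expProd_aux Q β hβm hβ0 C hC
  have hiter : ∀ n, ∀ v ∈ 𝒱hat, (TBell H Γ)^[n] v ∈ 𝒱hat := by
    intro n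
    induction n with
    | zero => intro v hv; exact hv
    | succ n ih =>
      intro v hv
      rw [Function.iterate_succ_apply']
      exact hself _ (ih v hv)
  have hbdd : BddAbove (Set.range fun p : X × Z => |v p - w p|) := by
    obtain ⟨_, M, hM⟩ := h𝒱hat v hv
    obtain ⟨_, N, hN⟩ := h𝒱hat w hw
    refine ⟨M + N, ?_⟩
    rintro _ ⟨p, rfl⟩
    exact (abs_sub _ _).trans (add_le_add (hM p) (hN p))
  set D := ⨆ p : X × Z, |v p - w p| with hD
  have hD0 : 0 ≤ D := Real.iSup_nonneg fun p => abs_nonneg _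
  have main : ∀ n, ∀ x z, |(TBell H Γ)^[n] v (x, z) - (TBell H Γ)^[n] w (x, z)| ≤
      expProd Q β n z * D := by
    intro n
    induction n with
    | zero =>
      intro x z
      have := le_ciSup hbdd (x, z)
      simpa [expProd] using this
    | succ n ih =>
      intro x z
      rw [Function.iterate_succ_apply', Function.iterate_succ_apply']
      refine sSup_image_aux (Γ x z) (hΓ x z) _ _ _ fun a ha => ?_
      refine (hH _ (hiter n v hv) _ (hiter n w hw) x z a ha).trans ?_
      obtain ⟨hm, h0, K, hK⟩ := aux n
      have hint : Integrable (expProd Q β n) (Q z) :=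
        Integrable.of_bound hm.aestronglyMeasurable K
          (ae_of_all _ fun z' => by rw [Real.norm_of_nonneg (h0 z')]; exact hK z')
      have h1 := integral_mono_of_nonneg (μ := Q z)
        (f := fun z' => ⨆ x' : X, |(TBell H Γ)^[n] v (x', z') - (TBell H Γ)^[n] w (x', z')|)
        (g := fun z' => expProd Q β n z' * D)
        (ae_of_all _ fun z' => Real.iSup_nonneg fun x' => abs_nonneg _)
        (hint.mul_const D) (ae_of_all _ fun z' => ciSup_le fun x' => ih x' z')
      rw [integral_mul_const] at h1
      calc _ ≤ β z * ((∫ z', expProd Q β n z' ∂(Q z)) * D) :=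
            mul_le_mul_of_nonneg_left h1 (hβ0 z)
        _ = expProd Q β (n + 1) z * D := by simp only [expProd]; ring
  obtain ⟨_, h0, K, hK⟩ := aux n
  refine ciSup_le fun p => (main n p.1 p.2).trans ?_
  refine mul_le_mul_of_nonneg_right ?_ hD0
  exact le_ciSup (f := expProd Q β n) ⟨K, by rintro _ ⟨z, rfl⟩; exact hK z⟩ p.2
end

section
/- Under the long-run contractivity assumption and the self-map assumption, there exists n ∈ ℕ such that T_σ^n is a contraction mapping on 𝒱 (with the supremum metric) for every feasible policy σ ∈ Σ, and T^n is a contraction mapping on 𝒱̂; that is, T_σ and T are eventually contracting. -/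
open MeasureTheory ProbabilityTheory Filter Topology

lemma expProd_nice {Z : Type*} [MeasurableSpace Z] (Q : ProbabilityTheory.Kernel Z Z)
    [IsMarkovKernel Q] (β : Z → ℝ) (hβm : Measurable β) (hβ0 : ∀ z, 0 ≤ β z)
    (hβb : ∃ C, ∀ z, β z ≤ C) (n : ℕ) :
    Measurable (expProd Q β n) ∧ (∀ z, 0 ≤ expProd Q β n z) ∧
      ∃ M, ∀ z, expProd Q β n z ≤ M := by
  obtain ⟨C, hC⟩ := hβb
  induction n with
  | zero => exact ⟨measurable_const, fun _ => zero_le_one, 1, fun _ => le_rfl⟩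
  | succ n ih =>
    obtain ⟨hm, h0, M, hM⟩ := ih
    refine ⟨?_, ?_, C * M, ?_⟩
    · exact hβm.mul (hm.stronglyMeasurable.integral_kernel (κ := Q)).measurable
    · exact fun z => mul_nonneg (hβ0 z) (integral_nonneg h0)
    · intro z
      have h1 : ∫ z', expProd Q β n z' ∂(Q z) ≤ M := by
        calc ∫ z', expProd Q β n z' ∂(Q z) ≤ ∫ z', M ∂(Q z) :=
              integral_mono_of_nonneg (ae_of_all _ h0) (integrable_const _) (ae_of_all _ hM)
          _ = M := by simp
      exact mul_le_mul (hC z) h1 (integral_nonneg h0) ((hβ0 z).trans (hC z))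

lemma iter_bound {X Z : Type*} [Nonempty X] [MeasurableSpace Z]
    (Q : ProbabilityTheory.Kernel Z Z)
    [IsMarkovKernel Q] (β : Z → ℝ) (hβm : Measurable β) (hβ0 : ∀ z, 0 ≤ β z)
    (hβb : ∃ C, ∀ z, β z ≤ C) (W : Set ((X × Z) → ℝ))
    (hW : ∀ v ∈ W, ∃ M, ∀ p, |v p| ≤ M)
    (T : ((X × Z) → ℝ) → ((X × Z) → ℝ)) (hT : ∀ v ∈ W, T v ∈ W)
    (hc : ∀ v ∈ W, ∀ w ∈ W, ∀ p : X × Z, |T v p - T w p| ≤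
      β p.2 * ∫ z', (⨆ x' : X, |v (x', z') - w (x', z')|) ∂(Q p.2))
    (v w : (X × Z) → ℝ) (hv : v ∈ W) (hw : w ∈ W) (n : ℕ) :
    (T^[n] v ∈ W ∧ T^[n] w ∈ W) ∧ ∀ p : X × Z, |T^[n] v p - T^[n] w p| ≤
      expProd Q β n p.2 * ⨆ p : X × Z, |v p - w p| := by
  induction n with
  | zero =>
    refine ⟨⟨hv, hw⟩, fun p => ?_⟩
    obtain ⟨M, hM⟩ := hW v hv
    obtain ⟨N, hN⟩ := hW w hw
    simp only [expProd, one_mul, Function.iterate_zero, id]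
    refine le_ciSup (f := fun p => |v p - w p|) ⟨M + N, ?_⟩ p
    rintro _ ⟨q, rfl⟩
    exact (abs_sub _ _).trans (add_le_add (hM q) (hN q))
  | succ n ih =>
    obtain ⟨⟨h1, h2⟩, h3⟩ := ih
    obtain ⟨hm, h0, M, hM⟩ := expProd_nice Q β hβm hβ0 hβb n
    simp only [Function.iterate_succ_apply']
    refine ⟨⟨hT _ h1, hT _ h2⟩, fun p => (hc _ h1 _ h2 p).trans ?_⟩
    simp only [expProd]
    rw [mul_assoc, ← integral_mul_const]
    refine mul_le_mul_of_nonneg_left ?_ (hβ0 _)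
    refine integral_mono_of_nonneg (ae_of_all _ fun z => Real.iSup_nonneg fun x => abs_nonneg _)
      ?_ (ae_of_all _ fun z => ciSup_le fun x => h3 (x, z))
    refine Integrable.mul_const (Integrable.of_bound hm.aestronglyMeasurable M
      (ae_of_all _ fun z => ?_)) _
    rw [Real.norm_eq_abs, abs_of_nonneg (h0 z)]
    exact hM z

lemma sSup_image_sub_le {A : Type*} (s : Set A) (hs : s.Nonempty) (f g : A → ℝ) (D : ℝ)
    (h : ∀ a ∈ s, |f a - g a| ≤ D) : |sSup (f '' s) - sSup (g '' s)| ≤ D := by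
  have key : ∀ f g : A → ℝ, (∀ a ∈ s, |f a - g a| ≤ D) → BddAbove (g '' s) →
      BddAbove (f '' s) ∧ sSup (f '' s) ≤ sSup (g '' s) + D := by
    intro f g h hb
    have : ∀ y ∈ f '' s, y ≤ sSup (g '' s) + D := by
      rintro _ ⟨a, ha, rfl⟩
      have := le_csSup hb (Set.mem_image_of_mem g ha)
      linarith [(abs_le.1 (h a ha)).2]
    exact ⟨⟨_, this⟩, csSup_le (hs.image f) this⟩
  have h' : ∀ a ∈ s, |g a - f a| ≤ D := fun a ha => abs_sub_comm (f a) (g a) ▸ h a ha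
  by_cases hg : BddAbove (g '' s)
  · have a1 := key f g h hg
    have a2 := key g f h' a1.1
    rw [abs_le]
    constructor <;> linarith [a1.2, a2.2]
  · have hf : ¬ BddAbove (f '' s) := fun hf => hg (key g f h' hf).1
    rw [Real.sSup_of_not_bddAbove hg, Real.sSup_of_not_bddAbove hf]
    obtain ⟨a, ha⟩ := hs
    simpa using (abs_nonneg _).trans (h a ha)

/-- **Eventual contractivity of `T_σ` and `T`.**
Under the long-run contractivity assumption and the self-map assumption, there exists
`n ∈ ℕ` (and a modulus `K < 1`) such that `T_σ^n` is a contraction on `𝒱` with the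
supremum metric for every feasible policy `σ ∈ Σ`, and `T^n` is a contraction on `𝒱̂`:
`T_σ` and `T` are eventually contracting. -/
theorem eventually_contracting
    {X Z A : Type*} [MetricSpace X] [MeasurableSpace X] [BorelSpace X] [Nonempty X]
    [MetricSpace Z] [MeasurableSpace Z] [BorelSpace Z] [Nonempty Z]
    [MetricSpace A] [TopologicalSpace.SeparableSpace A] [MeasurableSpace A] [BorelSpace A]
    (Q : ProbabilityTheory.Kernel Z Z) [IsMarkovKernel Q]
    (Γ : X → Z → Set A) (hΓ : ∀ x z, (Γ x z).Nonempty)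
    (H : X → Z → A → ((X × Z) → ℝ) → ℝ)
    -- `𝒱` is a set of bounded Borel measurable real functions on `S = X × Z`.
    (𝒱 : Set ((X × Z) → ℝ))
    (h𝒱 : ∀ v ∈ 𝒱, Measurable v ∧ ∃ M, ∀ p, |v p| ≤ M)
    -- Long-run contractivity assumption.
    (β : Z → ℝ) (hβm : Measurable β) (hβ0 : ∀ z, 0 ≤ β z) (hβb : ∃ C, ∀ z, β z ≤ C)
    (hH : ∀ v ∈ 𝒱, ∀ w ∈ 𝒱, ∀ x z a, a ∈ Γ x z →
      |H x z a v - H x z a w| ≤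
        β z * ∫ z', (⨆ x' : X, |v (x', z') - w (x', z')|) ∂(Q z))
    (hcon : ∃ n : ℕ, mSup Q β n < 1)
    -- Self-map assumption: `𝒱` is complete under the supremum metric, ...
    (hcomplete : ∀ f : ℕ → ((X × Z) → ℝ), (∀ k, f k ∈ 𝒱) →
      (∀ ε : ℝ, 0 < ε → ∃ N, ∀ m ≥ N, ∀ n ≥ N, ∀ p, |f m p - f n p| ≤ ε) →
      ∃ g ∈ 𝒱, TendstoUniformly f g atTop)
    -- ... `T_σ` maps `𝒱` into itself for every feasible policy `σ`, ...
    (hTσself : ∀ σ : X × Z → A, Measurable σ → (∀ p : X × Z, σ p ∈ Γ p.1 p.2) →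
      ∀ v ∈ 𝒱, Tpol H σ v ∈ 𝒱)
    -- ... and `𝒱̂ ⊆ 𝒱` is closed (under uniform convergence) with `T` a self-map on it.
    (𝒱hat : Set ((X × Z) → ℝ)) (hsub : 𝒱hat ⊆ 𝒱)
    (hclosed : ∀ f : ℕ → ((X × Z) → ℝ), (∀ k, f k ∈ 𝒱hat) →
      ∀ g ∈ 𝒱, TendstoUniformly f g atTop → g ∈ 𝒱hat)
    (hTself : ∀ v ∈ 𝒱hat, TBell H Γ v ∈ 𝒱hat) :
    ∃ n : ℕ, ∃ K : ℝ, 0 ≤ K ∧ K < 1 ∧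
      (∀ σ : X × Z → A, Measurable σ → (∀ p : X × Z, σ p ∈ Γ p.1 p.2) →
        ∀ v ∈ 𝒱, ∀ w ∈ 𝒱,
          (⨆ p : X × Z, |(Tpol H σ)^[n] v p - (Tpol H σ)^[n] w p|) ≤
            K * ⨆ p : X × Z, |v p - w p|) ∧
      (∀ v ∈ 𝒱hat, ∀ w ∈ 𝒱hat,
        (⨆ p : X × Z, |(TBell H Γ)^[n] v p - (TBell H Γ)^[n] w p|) ≤
          K * ⨆ p : X × Z, |v p - w p|) := by
  obtain ⟨n, hn⟩ := hcon
  obtain ⟨hm, h0, M, hM⟩ := expProd_nice Q β hβm hβ0 hβb n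
  have hK : ∀ z, expProd Q β n z ≤ mSup Q β n := fun z =>
    le_ciSup (f := expProd Q β n) ⟨M, by rintro _ ⟨q, rfl⟩; exact hM q⟩ z
  refine ⟨n, mSup Q β n, Real.iSup_nonneg h0, hn, ?_, ?_⟩
  · intro σ hσ hσΓ v hv w hw
    refine ciSup_le fun p => ?_
    refine ((iter_bound Q β hβm hβ0 hβb 𝒱 (fun v hv => (h𝒱 v hv).2) (Tpol H σ)
      (hTσself σ hσ hσΓ) (fun v hv w hw p => hH v hv w hw p.1 p.2 _ (hσΓ p))
      v w hv hw n).2 p).trans ?_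
    exact mul_le_mul_of_nonneg_right (hK _) (Real.iSup_nonneg fun _ => abs_nonneg _)
  · intro v hv w hw
    refine ciSup_le fun p => ?_
    refine ((iter_bound Q β hβm hβ0 hβb 𝒱hat (fun v hv => (h𝒱 v (hsub hv)).2) (TBell H Γ)
      hTself (fun v hv w hw p => sSup_image_sub_le _ (hΓ _ _) _ _ _
        fun a ha => hH v (hsub hv) w (hsub hw) p.1 p.2 a ha)
      v w hv hw n).2 p).trans ?_
    exact mul_le_mul_of_nonneg_right (hK _) (Real.iSup_nonneg fun _ => abs_nonneg _)
end

section
/- (Necessity and sufficiency of the spectral radius condition) Suppose Z is a compact metric space, β : Z → (0,∞) is continuous and strictly positive, Q is a Feller Markov kernel on Z, and L_β is a compact operator on the continuous functions on Z. Let {r_t}_{t≥0} be real random variables on the path space of the chain with 0 < a ≤ r_t ≤ b almost surely for constants a ≤ b. Then E_{z_0}[ Σ_{t≥0} (∏_{i=0}^{t-1} β(Z_i)) · r_t ] < ∞ for every initial state z_0 ∈ Z if and only if r(L_β) < 1. -/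
open MeasureTheory ProbabilityTheory Filter Topology BoundedContinuousFunction

lemma aux_summable_of_lt {m : ℕ → ℝ} (hm0 : ∀ n, 0 ≤ m n) {r : ℝ} (hr1 : r < 1)
    (hr : Tendsto (fun n : ℕ => m n ^ ((n : ℝ)⁻¹)) atTop (𝓝 r)) : Summable m := by
  have hr0 : 0 ≤ r := ge_of_tendsto' hr fun n => Real.rpow_nonneg (hm0 n) _
  obtain ⟨q, hrq, hq1⟩ := exists_between hr1
  have hq0 : 0 ≤ q := hr0.trans hrq.le
  have hs : Summable (fun n : ℕ => q ^ n) := summable_geometric_of_lt_one hq0 hq1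
  refine hs.of_norm_bounded_eventually_nat ?_
  filter_upwards [hr.eventually (gt_mem_nhds hrq), eventually_gt_atTop 0] with n hn hn0
  rw [Real.norm_of_nonneg (hm0 n)]
  have h1 : (m n ^ ((n : ℝ)⁻¹)) ^ n = m n := Real.rpow_inv_natCast_pow (hm0 n) hn0.ne'
  rw [← h1]
  exact pow_le_pow_left₀ (Real.rpow_nonneg (hm0 n) _) hn.le n

lemma aux_lt_of_lt_one {m : ℕ → ℝ} (hm0 : ∀ n, 0 ≤ m n)
    (hsub : ∀ n k, m (n + k) ≤ m k * m n) (h0 : m 0 = 1) {N : ℕ} (hN : m N < 1) {r : ℝ}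
    (hr : Tendsto (fun n : ℕ => m n ^ ((n : ℝ)⁻¹)) atTop (𝓝 r)) : r < 1 := by
  have hNpos : 0 < N := by
    rcases Nat.eq_zero_or_pos N with h | h
    · subst h; linarith
    · exact h
  have hpow : ∀ k, m (k * N) ≤ m N ^ k := by
    intro k
    induction k with
    | zero => simp [h0]
    | succ k ih =>
      rw [Nat.succ_mul, pow_succ]
      calc m (k * N + N) ≤ m N * m (k * N) := hsub _ _
        _ ≤ m N * m N ^ k := mul_le_mul_of_nonneg_left ih (hm0 N)
        _ = _ := by ring
  have ht : Tendsto (fun k : ℕ => k * N) atTop atTop := tendsto_id.atTop_mul_const' hNpos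
  have hle : r ≤ m N ^ ((N : ℝ)⁻¹) := by
    refine le_of_tendsto (hr.comp ht) ?_
    filter_upwards [eventually_gt_atTop 0] with k hk
    have hk' : (k : ℝ) ≠ 0 := by positivity
    calc m (k * N) ^ (((k * N : ℕ) : ℝ)⁻¹) ≤ (m N ^ k) ^ (((k * N : ℕ) : ℝ)⁻¹) :=
          Real.rpow_le_rpow (hm0 _) (hpow k) (by positivity)
      _ = m N ^ ((N : ℝ)⁻¹) := by
          rw [← Real.rpow_natCast, ← Real.rpow_mul (hm0 N)]
          congr 1
          push_cast
          field_simp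
  exact hle.trans_lt (Real.rpow_lt_one (hm0 N) hN (by positivity))

lemma aux_freq {m : ℕ → ℝ} (h1 : ∀ n, 1 ≤ m n) : ∃ᶠ n in atTop, m n ≤ 2 * m (n + 1) := by
  intro h
  obtain ⟨N, hN⟩ := eventually_atTop.1 h
  have hb : ∀ k : ℕ, m (N + k) ≤ m N * (1 / 2) ^ k := by
    intro k
    induction k with
    | zero => simp
    | succ k ih =>
      have := hN (N + k) (by omega)
      rw [pow_succ, ← add_assoc]
      linarith
  have ht : Tendsto (fun k : ℕ => m N * (1 / 2 : ℝ) ^ k) atTop (𝓝 (m N * 0)) :=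
    (tendsto_pow_atTop_nhds_zero_of_lt_one (by norm_num) (by norm_num)).const_mul _
  have : (1 : ℝ) ≤ m N * 0 := ge_of_tendsto' ht fun k => (h1 _).trans (hb k)
  linarith

lemma aux_exists_lt_one {Z : Type*} [MetricSpace Z] [CompactSpace Z]
    (L : (Z →ᵇ ℝ) → (Z →ᵇ ℝ)) (hLs : ∀ (c : ℝ) h, L (c • h) = c • L h)
    (hLcp : IsCompactOperator L) (F : ℕ → (Z →ᵇ ℝ)) (hF : ∀ n, F (n + 1) = L (F n))
    (h0 : ∀ z, Tendsto (fun n => F n z) atTop (𝓝 0)) : ∃ N, ‖F N‖ < 1 := by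
  by_contra! h1
  obtain ⟨φ, hφ, hφ2⟩ := extraction_of_frequently_atTop (aux_freq h1)
  obtain ⟨K, hK, hKn⟩ := hLcp
  obtain ⟨ε, hε, hball⟩ := Metric.mem_nhds_iff.1 hKn
  set c : ℕ → ℝ := fun k => ε / 3 / ‖F (φ k + 1)‖ with hc
  have hpos : ∀ n, 0 < ‖F n‖ := fun n => one_pos.trans_le (h1 n)
  have hcn : ∀ k, ‖c k‖ = c k := fun k =>
    Real.norm_of_nonneg (div_nonneg (by positivity) (hpos _).le)
  have hmem : ∀ k, c k • F (φ k + 1) ∈ K := by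
    intro k
    rw [hF, ← hLs]
    apply hball
    rw [mem_ball_zero_iff, norm_smul, hcn, hc]
    have := hφ2 k
    have hp := hpos (φ k + 1)
    simp only
    rw [div_mul_eq_mul_div, div_lt_iff₀ hp]
    nlinarith
  obtain ⟨g, -, ψ, hψ, hg⟩ := hK.tendsto_subseq hmem
  have hnorm : ∀ k, ‖c k • F (φ k + 1)‖ = ε / 3 := by
    intro k
    rw [norm_smul, hcn, hc]
    exact div_mul_cancel₀ _ (hpos _).ne'
  have hgn : ‖g‖ = ε / 3 := by
    refine tendsto_nhds_unique hg.norm ?_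
    simp only [Function.comp_def, hnorm]
    exact tendsto_const_nhds
  have hg0 : g = 0 := by
    ext z
    have e1 : Tendsto (fun k => (c (ψ k) • F (φ (ψ k) + 1)) z) atTop (𝓝 (g z)) :=
      ((continuous_eval_const (F := Z →ᵇ ℝ) z).tendsto g).comp hg
    refine tendsto_nhds_unique e1 ?_
    have hs : Tendsto (fun k => φ (ψ k) + 1) atTop atTop :=
      (tendsto_add_atTop_nat 1).comp ((hφ.comp hψ).tendsto_atTop)
    have e2 : Tendsto (fun k => ε / 3 * |F (φ (ψ k) + 1) z|) atTop (𝓝 0) := by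
      simpa using (((h0 z).comp hs).abs).const_mul (ε / 3)
    refine squeeze_zero_norm (fun k => ?_) e2
    rw [BoundedContinuousFunction.coe_smul, norm_smul, hcn, Real.norm_eq_abs]
    refine mul_le_mul_of_nonneg_right ?_ (abs_nonneg _)
    exact div_le_self (by positivity) (h1 _)
  rw [hg0, norm_zero] at hgn
  linarith

/-- **Necessity and sufficiency of the spectral radius condition.**
Suppose `Z` is a compact metric space, `β` is continuous and strictly positive, `Q` is a
Feller Markov kernel, and `L_β` is a compact operator on continuous functions.  If
`{r_t}` are random variables on the path space of the chain with `0 < a ≤ r_t ≤ b` a.s.,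
then `E_{z₀}[Σ_{t≥0} (∏_{i<t} β(Z_i)) r_t] < ∞` for every initial state `z₀` if and only
if `r(L_β) < 1`. -/
theorem spectral_radius_necessary_sufficient
    {Z : Type*} [MetricSpace Z] [CompactSpace Z] [Nonempty Z]
    [MeasurableSpace Z] [BorelSpace Z]
    (Q : ProbabilityTheory.Kernel Z Z) [IsMarkovKernel Q]
    (β : Z → ℝ) (hβc : Continuous β) (hβpos : ∀ z, 0 < β z)
    -- `Q` is Feller.
    (hFeller : ∀ v : Z →ᵇ ℝ, Continuous fun z => ∫ z', v z' ∂(Q z))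
    -- `L_β` is a compact operator on the (bounded) continuous functions on `Z`.
    (L : (Z →ᵇ ℝ) → (Z →ᵇ ℝ)) (hL : ∀ h : Z →ᵇ ℝ, ∀ z, L h z = β z * ∫ z', h z' ∂(Q z))
    (hLcp : IsCompactOperator L)
    -- `P z` is the law of the chain `{Z_t}` started at `z` on path space `ℕ → Z`.
    (P : Z → MeasureTheory.Measure (ℕ → Z)) (hP : ∀ z, IsProbabilityMeasure (P z))
    (hPlaw : ∀ z (n : ℕ),
      ∫⁻ ω, ∏ i ∈ Finset.range n, ENNReal.ofReal (β (ω i)) ∂(P z) =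
        ENNReal.ofReal (expProd Q β n z))
    -- the reward process `{r_t}` with `0 < a ≤ r_t ≤ b` almost surely.
    (rv : ℕ → (ℕ → Z) → ℝ) (hrvm : ∀ t, Measurable (rv t))
    (a b : ℝ) (ha : 0 < a) (hab : a ≤ b)
    (hrv : ∀ z, ∀ t, ∀ᵐ ω ∂(P z), a ≤ rv t ω ∧ rv t ω ≤ b)
    -- `r(L_β)` is the limit defining the spectral radius.
    (r : ℝ) (hr : Tendsto (fun n : ℕ => mSup Q β n ^ ((n : ℝ)⁻¹)) atTop (𝓝 r)) :
    (∀ z₀ : Z,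
      ∫⁻ ω, ∑' t : ℕ,
        (∏ i ∈ Finset.range t, ENNReal.ofReal (β (ω i))) * ENNReal.ofReal (rv t ω)
        ∂(P z₀) < ⊤) ↔ r < 1 := by
  classical
  let F : ℕ → (Z →ᵇ ℝ) := fun n => Nat.rec 1 (fun _ f => L f) n
  have hF : ∀ n, F (n + 1) = L (F n) := fun n => rfl
  have hFe : ∀ n z, F n z = expProd Q β n z := by
    intro n
    induction n with
    | zero => intro z; rfl
    | succ n ih =>
      intro z
      rw [hF, hL]
      simp only [ih, expProd]
  have hF0 : ∀ n z, 0 ≤ F n z := by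
    intro n
    induction n with
    | zero => intro z; exact zero_le_one
    | succ n ih =>
      intro z
      rw [hF, hL]
      exact mul_nonneg (hβpos z).le (integral_nonneg ih)
  have hm : ∀ n, mSup Q β n = ‖F n‖ := by
    intro n
    rw [BoundedContinuousFunction.norm_eq_iSup_norm, mSup]
    refine iSup_congr fun z => ?_
    rw [← hFe, Real.norm_of_nonneg (hF0 n z)]
  have hLs : ∀ (c : ℝ) h, L (c • h) = c • L h := by
    intro c h
    ext z
    simp only [BoundedContinuousFunction.coe_smul, hL, smul_eq_mul, integral_const_mul]
    ring
  have hsub1 : ∀ k n z, F (n + k) z ≤ ‖F k‖ * F n z := by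
    intro k n
    induction n with
    | zero =>
      intro z
      have : F 0 z = 1 := rfl
      rw [this, mul_one, zero_add]
      exact (le_abs_self _).trans ((F k).norm_coe_le_norm z)
    | succ n ih =>
      intro z
      rw [add_right_comm, hF, hL, hF, hL]
      have hi : ∀ f : Z →ᵇ ℝ, Integrable (fun x => f x) (Q z) := fun f => f.integrable _
      have := integral_mono (hi (F (n + k))) ((hi (F n)).const_mul ‖F k‖) ih
      rw [integral_const_mul] at this
      calc _ ≤ β z * (‖F k‖ * ∫ x, F n x ∂(Q z)) :=
            mul_le_mul_of_nonneg_left this (hβpos z).le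
        _ = _ := by ring
  have hsub : ∀ n k, ‖F (n + k)‖ ≤ ‖F k‖ * ‖F n‖ := by
    intro n k
    refine (BoundedContinuousFunction.norm_le (by positivity)).2 fun z => ?_
    rw [Real.norm_of_nonneg (hF0 _ z)]
    refine (hsub1 k n z).trans (mul_le_mul_of_nonneg_left ?_ (norm_nonneg _))
    exact (le_abs_self _).trans ((F n).norm_coe_le_norm z)
  simp only [hm] at hr
  have hmeasP : ∀ t, Measurable fun ω : ℕ → Z =>
      ∏ i ∈ Finset.range t, ENNReal.ofReal (β (ω i)) := fun t =>
    Finset.measurable_prod _ fun i _ =>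
      (hβc.measurable.comp (measurable_pi_apply i)).ennreal_ofReal
  have hts : ∀ z, ∫⁻ ω, ∑' t : ℕ,
        (∏ i ∈ Finset.range t, ENNReal.ofReal (β (ω i))) * ENNReal.ofReal (rv t ω) ∂(P z)
      = ∑' t : ℕ, ∫⁻ ω, (∏ i ∈ Finset.range t, ENNReal.ofReal (β (ω i))) *
          ENNReal.ofReal (rv t ω) ∂(P z) := fun z =>
    lintegral_tsum fun t => ((hmeasP t).mul (hrvm t).ennreal_ofReal).aemeasurable
  have hlow : ∀ z t, ENNReal.ofReal (F t z) * ENNReal.ofReal a ≤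
      ∫⁻ ω, (∏ i ∈ Finset.range t, ENNReal.ofReal (β (ω i))) *
          ENNReal.ofReal (rv t ω) ∂(P z) := by
    intro z t
    rw [hFe, ← hPlaw, ← lintegral_mul_const _ (hmeasP t)]
    refine lintegral_mono_ae ?_
    filter_upwards [hrv z t] with ω hω
    gcongr
    exact hω.1
  have hup : ∀ z t, ∫⁻ ω, (∏ i ∈ Finset.range t, ENNReal.ofReal (β (ω i))) *
          ENNReal.ofReal (rv t ω) ∂(P z) ≤ ENNReal.ofReal (F t z) * ENNReal.ofReal b := by
    intro z t
    rw [hFe, ← hPlaw, ← lintegral_mul_const _ (hmeasP t)]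
    refine lintegral_mono_ae ?_
    filter_upwards [hrv z t] with ω hω
    gcongr
    exact hω.2
  constructor
  · intro hfin
    have h0 : ∀ z, Tendsto (fun n => F n z) atTop (𝓝 0) := by
      intro z
      have h2 := hfin z
      rw [hts] at h2
      have h3 := (ENNReal.tsum_le_tsum (hlow z)).trans_lt h2
      rw [ENNReal.tsum_mul_right] at h3
      have h4 : ∑' t, ENNReal.ofReal (F t z) ≠ ⊤ := by
        intro h
        rw [h, ENNReal.top_mul (by simpa using ha)] at h3
        exact lt_irrefl _ h3
      have h5 := ENNReal.tendsto_atTop_zero_of_tsum_ne_top h4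
      have h6 := (ENNReal.tendsto_toReal ENNReal.zero_ne_top).comp h5
      simpa [Function.comp_def, ENNReal.toReal_ofReal (hF0 _ z)] using h6
    obtain ⟨N, hN⟩ := aux_exists_lt_one L hLs hLcp F hF h0
    refine aux_lt_of_lt_one (fun n => norm_nonneg (F n)) hsub ?_ hN hr
    change ‖(1 : Z →ᵇ ℝ)‖ = 1
    exact norm_one
  · intro hr1 z
    have hs := aux_summable_of_lt (fun n => norm_nonneg (F n)) hr1 hr
    rw [hts]
    refine (ENNReal.tsum_le_tsum (hup z)).trans_lt ?_
    rw [ENNReal.tsum_mul_right]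
    refine ENNReal.mul_lt_top ?_ ENNReal.ofReal_lt_top
    have hs2 : Summable fun t => F t z := Summable.of_nonneg_of_le (fun t => hF0 t z)
      (fun t => (le_abs_self _).trans ((F t).norm_coe_le_norm z)) hs
    exact hs2.tsum_ofReal_lt_top
end
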